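/- For all integers m ≥ 1 and k with 0 ≤ k ≤ m: Σ_{i=k}^{2m−k} (−1)^i · C(2m, i−k) · C(2m, i) · C(2m, i+k) = (−1)^m · (2m)!² · (3m)! / ( m! · (m−k)! · (m+k)! · (2m−k)! · (2m+k)! ), where C(a,b) denotes the binomial coefficient and the sum is taken in ℤ; equivalently, the product of the left-hand side with m!·(m−k)!·(m+k)!·(2m−k)!·(2m+k)! equals (−1)^m·(2m)!²·(3m)!. -/

import Mathlib

/-!
The identity is Dixon's: at `a = m - k`, `b = m`, `c = m + k` the summand is, up to the factor
`(2m)!³`, the alternating product `(-1)^j / ((a+j)! (a-j)! (b+j)! (b-j)! (c+j)! (c-j)!)`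
with `j = i - m`. The sum over `j` satisfies a first-order recurrence in `c`, proved by creative
telescoping, and at `c = 0` only the term `j = 0` survives.
-/

open Finset Nat

/-- The reciprocal factorial `1 / n!` on the integers, equal to `0` at negative `n` (as `1 / Γ(n+1)`
is). Extending it this way makes `1 / (n-1)! = n / n!` true without restriction. -/
def invFactorial : ℤ → ℚ
  | (n : ℕ) => (n ! : ℚ)⁻¹
  | .negSucc _ => 0

@[simp]
lemma invFactorial_natCast (n : ℕ) : invFactorial n = (n ! : ℚ)⁻¹ := rfl

lemma invFactorial_of_neg {n : ℤ} (hn : n < 0) : invFactorial n = 0 := by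
  obtain ⟨k, rfl⟩ := Int.eq_negSucc_of_lt_zero hn
  rfl

lemma invFactorial_sub_one (n : ℤ) : invFactorial (n - 1) = n * invFactorial n := by
  rcases lt_trichotomy n 0 with hn | rfl | hn
  · rw [invFactorial_of_neg hn, invFactorial_of_neg (by lia), mul_zero]
  · rw [invFactorial_of_neg (by lia), Int.cast_zero, zero_mul]
  · obtain ⟨k, rfl⟩ : ∃ k : ℕ, n = (k + 1 : ℕ) := ⟨n.toNat - 1, by lia⟩
    rw [Int.natCast_succ, add_sub_cancel_right, ← Int.natCast_succ, invFactorial_natCast,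
      invFactorial_natCast, factorial_succ]
    push_cast
    field_simp

lemma cast_choose_eq_factorial_mul_invFactorial (n i : ℕ) :
    (n.choose i : ℚ) = n ! * (invFactorial i * invFactorial (n - i)) := by
  rcases le_or_gt i n with hi | hi
  · rw [← Int.ofNat_sub hi, invFactorial_natCast, invFactorial_natCast, cast_choose ℚ hi]
    field_simp
  · rw [choose_eq_zero_of_lt hi, invFactorial_of_neg (n := n - i) (by lia), mul_zero, mul_zero,
      cast_zero]

/-- The summand of Dixon's identity without its sign, normalised so that it is symmetric in
`a`, `b`, `c`. -/
def dixonTerm (a b c j : ℤ) : ℚ :=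
  invFactorial (a + j) * invFactorial (a - j) * (invFactorial (b + j) * invFactorial (b - j)) *
    (invFactorial (c + j) * invFactorial (c - j))

/-- The certificate for creative telescoping: a combination of `dixonTerm a b (c + 1) j` and
`dixonTerm a b c j` is the sum of its values at `j` and `j + 1`. -/
def dixonCertificate (a b c j : ℤ) : ℚ :=
  invFactorial (a + j - 1) * invFactorial (a - j) *
    (invFactorial (b + j - 1) * invFactorial (b - j)) *
    (invFactorial (c + j) * invFactorial (c + 1 - j))

lemma dixonTerm_add_one_sub_dixonTerm (a b c j : ℤ) :
    2 * ((c + 1) * (a + c + 1) * (b + c + 1) * dixonTerm a b (c + 1) j -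
        (a + b + c + 1) * dixonTerm a b c j) =
      dixonCertificate a b c j + dixonCertificate a b c (j + 1) := by
  have ha_add : invFactorial (a + j - 1) = (a + j) * invFactorial (a + j) := by
    exact_mod_cast invFactorial_sub_one (a + j)
  have ha_sub : invFactorial (a - (j + 1)) = (a - j) * invFactorial (a - j) := by
    rw [← sub_sub]; exact_mod_cast invFactorial_sub_one (a - j)
  have hb_add : invFactorial (b + j - 1) = (b + j) * invFactorial (b + j) := by
    exact_mod_cast invFactorial_sub_one (b + j)
  have hb_sub : invFactorial (b - (j + 1)) = (b - j) * invFactorial (b - j) := by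
    rw [← sub_sub]; exact_mod_cast invFactorial_sub_one (b - j)
  have hc_add : invFactorial (c + j) = (c + 1 + j) * invFactorial (c + 1 + j) := by
    rw [← add_sub_cancel_right (c + j) 1, add_right_comm]
    exact_mod_cast invFactorial_sub_one (c + 1 + j)
  have hc_sub : invFactorial (c - j) = (c + 1 - j) * invFactorial (c + 1 - j) := by
    rw [← add_sub_cancel_right (c - j) 1, sub_add_eq_add_sub]
    exact_mod_cast invFactorial_sub_one (c + 1 - j)
  simp only [dixonTerm, dixonCertificate, ← add_assoc, add_sub_cancel_right,
    add_sub_add_right_eq_sub, add_right_comm c j 1]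
  rw [ha_add, ha_sub, hb_add, hb_sub, hc_add, hc_sub]
  ring

/-- The alternating sum of `dixonTerm a b c j` over `-a ≤ j ≤ a`, with `j = i - a`; its sign is
`(-1)^i = (-1)^(a + j)`. -/
def dixonSum (a : ℕ) (b c : ℤ) : ℚ :=
  ∑ i ∈ range (2 * a + 1), (-1) ^ i * dixonTerm a b c (i - a)

lemma dixonSum_zero_right (a : ℕ) (b : ℤ) :
    dixonSum a b 0 = (-1) ^ a * (invFactorial a ^ 2 * invFactorial b ^ 2) := by
  have hterm : ∀ j ≠ 0, dixonTerm a b 0 j = 0 := by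
    intro j hj
    rcases lt_or_gt_of_ne hj with hj | hj
    · simp [dixonTerm, invFactorial_of_neg hj]
    · simp [dixonTerm, invFactorial_of_neg (neg_neg_of_pos hj)]
  rw [dixonSum, sum_eq_single_of_mem a (mem_range.mpr (by lia))
    fun i _ hi ↦ by rw [hterm _ (by lia), mul_zero]]
  have h0 : invFactorial 0 = 1 := by simpa using invFactorial_natCast 0
  simp only [dixonTerm, sub_self, add_zero, sub_zero, h0]
  ring

lemma sum_neg_one_pow_mul_add_succ {R : Type*} [Ring R] (g : ℕ → R) (n : ℕ) :
    ∑ i ∈ range n, (-1) ^ i * (g i + g (i + 1)) = g 0 - (-1) ^ n * g n := by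
  simpa [pow_succ, mul_add] using sum_range_sub' (fun i ↦ (-1) ^ i * g i) n

lemma dixonSum_add_one_right (a : ℕ) (b c : ℤ) :
    (c + 1) * (a + c + 1) * (b + c + 1) * dixonSum a b (c + 1) =
      (a + b + c + 1) * dixonSum a b c := by
  have hfirst : dixonCertificate a b c (-a) = 0 := by
    simp [dixonCertificate, invFactorial_of_neg]
  have hlast : dixonCertificate a b c (a + 1) = 0 := by
    simp [dixonCertificate, invFactorial_of_neg]
  have htele := sum_neg_one_pow_mul_add_succ (fun i ↦ dixonCertificate a b c (i - a)) (2 * a + 1)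
  have hend : ((2 * a + 1 : ℕ) - a : ℤ) = a + 1 := by lia
  rw [hend, hlast, cast_zero, zero_sub, hfirst, mul_zero, sub_zero] at htele
  refine sub_eq_zero.mp (mul_left_cancel₀ (two_ne_zero (α := ℚ)) ?_)
  rw [mul_zero, ← htele, dixonSum, dixonSum, mul_sum, mul_sum, ← sum_sub_distrib, mul_sum]
  refine sum_congr rfl fun i _ ↦ ?_
  rw [cast_succ, add_sub_right_comm, ← dixonTerm_add_one_sub_dixonTerm]
  push_cast
  ring

theorem dixonSum_natCast (a b c : ℕ) :
    dixonSum a b c =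
      (-1) ^ a * (a + b + c)! / (a ! * b ! * c ! * (a + b)! * (a + c)! * (b + c)!) := by
  induction c with
  | zero =>
    rw [cast_zero, dixonSum_zero_right, invFactorial_natCast, invFactorial_natCast]
    simp only [add_zero, factorial_zero, cast_one]
    field_simp
  | succ c ih =>
    have hrec := dixonSum_add_one_right a b c
    rw [ih] at hrec
    simp only [← add_assoc, factorial_succ]
    push_cast at hrec ⊢
    field_simp at hrec ⊢
    linear_combination hrec

lemma choose_mul_choose_mul_choose_eq_dixonTerm (a k i : ℕ) :
    ((2 * (a + k)).choose i * (2 * (a + k)).choose (i + k) *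
        (2 * (a + k)).choose (i + 2 * k) : ℚ) =
      (2 * (a + k))! ^ 3 * dixonTerm a (a + k : ℕ) (a + 2 * k : ℕ) (i - a) := by
  have ha : (a : ℤ) + (i - a) = i := by ring
  have ha' : (a : ℤ) - (i - a) = (2 * (a + k) : ℕ) - (i + 2 * k : ℕ) := by push_cast; ring
  have hb : ((a + k : ℕ) : ℤ) + (i - a) = (i + k : ℕ) := by push_cast; ring
  have hb' : ((a + k : ℕ) : ℤ) - (i - a) = (2 * (a + k) : ℕ) - (i + k : ℕ) := by push_cast; ring
  have hc : ((a + 2 * k : ℕ) : ℤ) + (i - a) = (i + 2 * k : ℕ) := by push_cast; ring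
  have hc' : ((a + 2 * k : ℕ) : ℤ) - (i - a) = (2 * (a + k) : ℕ) - i := by push_cast; ring
  simp only [cast_choose_eq_factorial_mul_invFactorial, dixonTerm, ha, ha', hb, hb', hc, hc']
  ring

lemma sum_Icc_choose_eq_dixonSum (a k : ℕ) :
    ∑ i ∈ Icc k (2 * a + k), (-1 : ℚ) ^ i * (2 * (a + k)).choose (i - k) *
        (2 * (a + k)).choose i * (2 * (a + k)).choose (i + k) =
      (-1) ^ k * (2 * (a + k))! ^ 3 * dixonSum a (a + k : ℕ) (a + 2 * k : ℕ) := by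
  rw [← Ico_add_one_right_eq_Icc, sum_Ico_eq_sum_range, dixonSum, mul_sum]
  refine sum_congr (by congr 1; lia) fun i _ ↦ ?_
  have hchoose := choose_mul_choose_mul_choose_eq_dixonTerm a k i
  rw [add_tsub_cancel_left, add_comm k i, add_assoc i k k, ← two_mul, pow_add]
  linear_combination (-1) ^ i * (-1) ^ k * hchoose

theorem genmm2_identity (m k : ℕ) (hm : 1 ≤ m) (hkm : k ≤ m) :
    (∑ i ∈ Finset.Icc k (2 * m - k),
        (-1 : ℤ) ^ i * (2 * m).choose (i - k) * (2 * m).choose i * (2 * m).choose (i + k)) *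
      ((m.factorial : ℤ) * (m - k).factorial * (m + k).factorial *
        (2 * m - k).factorial * (2 * m + k).factorial) =
    (-1 : ℤ) ^ m * ((2 * m).factorial : ℤ) ^ 2 * (3 * m).factorial := by
  obtain ⟨a, rfl⟩ := Nat.exists_eq_add_of_le' hkm
  have h_top : 2 * (a + k) - k = 2 * a + k := by lia
  have h_sum : a + (a + k) + (a + 2 * k) = 3 * (a + k) := by lia
  have h_ab : a + (a + k) = 2 * a + k := by lia
  have h_ac : a + (a + 2 * k) = 2 * (a + k) := by lia
  have h_bc : a + k + (a + 2 * k) = 2 * (a + k) + k := by lia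
  have h_c : a + k + k = a + 2 * k := by lia
  have h_dixon := dixonSum_natCast a (a + k) (a + 2 * k)
  rw [h_sum, h_ab, h_ac, h_bc] at h_dixon
  rw [h_top, add_tsub_cancel_right, h_c]
  qify
  rw [sum_Icc_choose_eq_dixonSum, h_dixon, pow_add]
  field_simp
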